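/- Let (x̄,ȳ) ∈ dom g × dom h, η_y > 0 and any vector s ∈ Y; set ȳ⁺ = prox_{η_y h}(ȳ + η_y s), G̃_y = (ȳ⁺ − ȳ)/η_y, and let y_*(x̄) be a maximizer of y ↦ f(x̄,y) − h(y). Then 2η_y⟨G̃_y, ȳ − y_*(x̄)⟩ + η_y²‖G̃_y‖² ≤ −η_y μ ‖ȳ − y_*(x̄)‖² − η_y²(1 − Lη_y)‖G̃_y‖² + 2η_y⟨s − ∇_y f(x̄,ȳ), ȳ⁺ − y_*(x̄)⟩. -/

import Mathlib

/-! Three inequalities add up to the claim. The optimality condition of the proximal step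
(`IsProxPt.inner_le`) bounds `h ȳ⁺ - h y_*` by an inner product; maximality of `y_*` replaces
`h y_* - h ȳ⁺` by `f y_* - f ȳ⁺`; and this difference is estimated through the linearisation of
`f` at `ȳ`, from above by strong concavity at `y_*` and from below at `ȳ⁺` by the quadratic bound
coming from the Lipschitz gradient (`quadratic_lower_bound`). -/

noncomputable section

open scoped RealInnerProductSpace

/-- `p` is a proximal point of `z` with stepsize `η` for the proper closed convex
function `r` with effective domain `S` (i.e. `r = +∞` outside `S`). -/
def IsProxPt {E : Type*} [NormedAddCommGroup E] [InnerProductSpace ℝ E]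
    (r : E → ℝ) (S : Set E) (η : ℝ) (z p : E) : Prop :=
  p ∈ S ∧ ∀ u ∈ S, r p + ‖p - z‖ ^ 2 / (2 * η) ≤ r u + ‖u - z‖ ^ 2 / (2 * η)

/-- First-order optimality of a proximal point, that is, `(z - p) / η ∈ ∂r(p)`. -/
theorem IsProxPt.inner_le {E : Type*} [NormedAddCommGroup E] [InnerProductSpace ℝ E]
    {r : E → ℝ} {S : Set E} {η : ℝ} {z p : E} (hη : 0 < η) (hr : ConvexOn ℝ S r)
    (hp : IsProxPt r S η z p) {w : E} (hw : w ∈ S) :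
    η * (r p - r w) ≤ ⟪p - z, w - p⟫ := by
  obtain ⟨hpS, hmin⟩ := hp
  -- Compare `p` with the point `(1 - t) • p + t • w` of the segment.
  have key : ∀ t : ℝ, 0 < t → t < 1 →
      2 * (η * (r p - r w) - ⟪p - z, w - p⟫) ≤ t * ‖w - p‖ ^ 2 := by
    intro t ht ht1
    have h1 := hmin _ (hr.1 hpS hw (sub_nonneg.2 ht1.le) ht.le (by ring))
    have h2 := hr.2 hpS hw (sub_nonneg.2 ht1.le) ht.le (by ring)
    have h3 : ((1 - t) • p + t • w) - z = (p - z) + t • (w - p) := by module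
    have h4 : ‖(p - z) + t • (w - p)‖ ^ 2
        = ‖p - z‖ ^ 2 + 2 * (t * ⟪p - z, w - p⟫) + t ^ 2 * ‖w - p‖ ^ 2 := by
      rw [norm_add_sq_real, real_inner_smul_right, norm_smul, mul_pow, Real.norm_eq_abs, sq_abs]
    rw [h3, h4] at h1
    simp only [smul_eq_mul] at h2
    have h5 : r p + ‖p - z‖ ^ 2 / (2 * η) ≤ (1 - t) * r p + t * r w +
        (‖p - z‖ ^ 2 + 2 * (t * ⟪p - z, w - p⟫) + t ^ 2 * ‖w - p‖ ^ 2) / (2 * η) := by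
      linarith
    have h6 := mul_le_mul_of_nonneg_right h5 (by positivity : 0 ≤ 2 * η)
    rw [add_mul, add_mul, div_mul_cancel₀ _ (by positivity), div_mul_cancel₀ _ (by positivity)]
      at h6
    refine le_of_mul_le_mul_left ?_ ht
    nlinarith
  by_contra! hcon
  -- With `A > 0` the excess and `B = ‖w - p‖ ^ 2`, the choice `t = A / (A + B + 1)` gives `t B < A`.
  set A := η * (r p - r w) - ⟪p - z, w - p⟫ with hA
  have hApos : 0 < A := by linarith
  have hB : 0 ≤ ‖w - p‖ ^ 2 := by positivity
  have hk := key (A / (A + ‖w - p‖ ^ 2 + 1)) (by positivity)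
    ((div_lt_one (by positivity)).2 (by linarith))
  rw [div_mul_eq_mul_div, le_div_iff₀ (by positivity)] at hk
  nlinarith [mul_nonneg hApos.le hB, mul_pos hApos hApos]

/-- Integrating an `L`-Lipschitz gradient along a segment bounds the function from below by its
linearisation minus `L / 2` times the squared distance. -/
theorem quadratic_lower_bound {E : Type*} [NormedAddCommGroup E] [InnerProductSpace ℝ E]
    [CompleteSpace E] {f : E → ℝ} {g : E → E} {L : ℝ}
    (hdiff : ∀ y, HasGradientAt f (g y) y)
    (hlip : ∀ y y', ‖g y - g y'‖ ≤ L * ‖y - y'‖) (x y : E) :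
    f x + ⟪g x, y - x⟫ - L / 2 * ‖y - x‖ ^ 2 ≤ f y := by
  set d := y - x with hd
  have hder : ∀ t : ℝ, HasDerivAt
      (fun t : ℝ => f (x + t • d) - t * ⟪g x, d⟫ + L / 2 * ‖d‖ ^ 2 * t ^ 2)
      (⟪g (x + t • d), d⟫ - ⟪g x, d⟫ + L * ‖d‖ ^ 2 * t) t := by
    intro t
    have h1 : HasDerivAt (fun t : ℝ => x + t • d) d t := by
      simpa using ((hasDerivAt_id t).smul_const d).const_add x
    have h2 := (hdiff (x + t • d)).hasFDerivAt.comp_hasDerivAt t h1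
    have h3 : HasDerivAt (fun t : ℝ => f (x + t • d)) ⟪g (x + t • d), d⟫ t := by
      simpa [Function.comp_def] using h2
    have h4 := (hasDerivAt_id t).mul_const ⟪g x, d⟫
    have h5 := (hasDerivAt_pow 2 t).const_mul (L / 2 * ‖d‖ ^ 2)
    refine ((h3.sub h4).add h5).congr_deriv ?_
    norm_num
    ring
  have hmono : MonotoneOn
      (fun t : ℝ => f (x + t • d) - t * ⟪g x, d⟫ + L / 2 * ‖d‖ ^ 2 * t ^ 2) (Set.Icc 0 1) := by
    refine monotoneOn_of_deriv_nonneg (convex_Icc 0 1)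
      (fun t _ => (hder t).continuousAt.continuousWithinAt)
      (fun t _ => (hder t).differentiableAt.differentiableWithinAt) ?_
    intro t ht
    rw [interior_Icc] at ht
    rw [(hder t).deriv, ← inner_sub_left]
    have h1 := abs_le.1 (abs_real_inner_le_norm (g (x + t • d) - g x) d)
    have h2 := hlip (x + t • d) x
    rw [add_sub_cancel_left, norm_smul, Real.norm_of_nonneg ht.1.le] at h2
    nlinarith [mul_le_mul_of_nonneg_right h2 (norm_nonneg d)]
  have h01 := hmono (Set.left_mem_Icc.2 zero_le_one) (Set.right_mem_Icc.2 zero_le_one) zero_le_one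
  have hxd : x + d = y := by rw [hd]; abel
  simp only [zero_smul, one_smul, add_zero, hxd] at h01
  linarith

/-- **Corollary of the dual three-point inequality (Corollary `cor:str-concavity`).**
Let `ȳ ∈ dom h`, `η_y > 0` and `s ∈ Y`; set `ȳ⁺ = prox_{η_y h}(ȳ + η_y s)`,
`G̃_y = (ȳ⁺ − ȳ)/η_y`, and let `y_*(x̄)` be a maximizer of `y ↦ f(x̄,y) − h(y)`.
Then `2η_y⟨G̃_y, ȳ − y_*(x̄)⟩ + η_y²‖G̃_y‖²
  ≤ −η_yμ‖ȳ − y_*(x̄)‖² − η_y²(1 − Lη_y)‖G̃_y‖² + 2η_y⟨s − ∇_y f(x̄,ȳ), ȳ⁺ − y_*(x̄)⟩`.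
Here `fy = f(x̄,·)` is differentiable with `L`-Lipschitz gradient and `μ`-strongly
concave (`μ ≥ 0`). -/
theorem dual_ascent_contraction
    {Y : Type*} [NormedAddCommGroup Y] [InnerProductSpace ℝ Y] [FiniteDimensional ℝ Y]
    (h : Y → ℝ) (Sh : Set Y)
    (hSh_cl : IsClosed Sh) (hSh_ne : Sh.Nonempty) (hh_cvx : ConvexOn ℝ Sh h)
    (fy : Y → ℝ) (gradfy : Y → Y) (L μ : ℝ) (hL : 0 ≤ L) (hμ : 0 ≤ μ)
    (hdiff : ∀ y, HasGradientAt fy (gradfy y) y)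
    (hlip : ∀ y y', ‖gradfy y - gradfy y'‖ ≤ L * ‖y - y'‖)
    (hconc : ∀ y y', fy y' ≤ fy y + ⟪gradfy y, y' - y⟫ - μ / 2 * ‖y' - y‖ ^ 2)
    (ηy : ℝ) (hηy : 0 < ηy)
    (proxh : Y → Y) (hproxh : ∀ z, IsProxPt h Sh ηy z (proxh z))
    (ystar : Y) (hystar_mem : ystar ∈ Sh)
    (hystar_max : ∀ y ∈ Sh, fy y - h y ≤ fy ystar - h ystar)
    (yb : Y) (hyb : yb ∈ Sh) (s : Y) :
    2 * ηy * ⟪ηy⁻¹ • (proxh (yb + ηy • s) - yb), yb - ystar⟫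
        + ηy ^ 2 * ‖ηy⁻¹ • (proxh (yb + ηy • s) - yb)‖ ^ 2
      ≤ - (ηy * μ) * ‖yb - ystar‖ ^ 2
        - ηy ^ 2 * (1 - L * ηy) * ‖ηy⁻¹ • (proxh (yb + ηy • s) - yb)‖ ^ 2
        + 2 * ηy * ⟪s - gradfy yb, proxh (yb + ηy • s) - ystar⟫ := by
  have hprox := (hproxh (yb + ηy • s)).inner_le hηy hh_cvx hystar_mem
  have hmax := hystar_max _ (hproxh (yb + ηy • s)).1
  set p := proxh (yb + ηy • s)
  have hlow := quadratic_lower_bound hdiff hlip yb p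
  have hup := hconc yb ystar
  rw [norm_sub_rev ystar yb] at hup
  -- Clear the factor `ηy⁻¹` from the gradient mapping.
  have e1 : ηy * ⟪ηy⁻¹ • (p - yb), yb - ystar⟫ = ⟪p - yb, yb - ystar⟫ := by
    rw [real_inner_smul_left, mul_inv_cancel_left₀ hηy.ne']
  have e2 : ηy ^ 2 * ‖ηy⁻¹ • (p - yb)‖ ^ 2 = ‖p - yb‖ ^ 2 := by
    rw [← mul_pow, norm_smul, Real.norm_of_nonneg (inv_nonneg.2 hηy.le),
      mul_inv_cancel_left₀ hηy.ne']
  have e3 : ⟪p - (yb + ηy • s), ystar - p⟫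
      = - ⟪p - yb, yb - ystar⟫ - ‖p - yb‖ ^ 2 - ηy * ⟪s, ystar - p⟫ := by
    rw [← real_inner_self_eq_norm_sq, ← sub_sub, inner_sub_left, real_inner_smul_left,
      show ystar - p = -(yb - ystar) - (p - yb) by abel, inner_sub_right (p - yb),
      inner_neg_right]
  have e4 : ⟪s - gradfy yb, p - ystar⟫
      = - ⟪s, ystar - p⟫ + ⟪gradfy yb, p - yb⟫ * (-1) + ⟪gradfy yb, ystar - yb⟫ := by
    rw [inner_sub_left, show p - ystar = -(ystar - p) by abel, inner_neg_right, inner_neg_right,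
      show ystar - p = (ystar - yb) - (p - yb) by abel, inner_sub_right (gradfy yb)]
    ring
  have hh : h ystar - h p ≤ ⟪gradfy yb, ystar - yb⟫ - μ / 2 * ‖yb - ystar‖ ^ 2
      - ⟪gradfy yb, p - yb⟫ + L / 2 * ‖p - yb‖ ^ 2 := by linarith
  have hh' := mul_le_mul_of_nonneg_left hh hηy.le
  rw [e3] at hprox
  rw [e4, mul_assoc 2 ηy, e1, mul_right_comm (ηy ^ 2), e2]
  linarith
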